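/- Let Δ be a simplicial complex over a field k and suppose A ⊆ Δ is an excellent set of faces, i.e., A is an independent set of faces and every facet of Δ contains some (necessarily unique) member of A. If Δ satisfies Serre's condition (S_ℓ) with ℓ ≥ 2, then Δ_A = Δ − {σ ∈ Δ : σ ⊇ τ for some τ ∈ A} satisfies (S_{ℓ−1}). -/

import Mathlib

open Finset

/-- An abstract simplicial complex on vertex type `V`, given by a finite, downward closed
family of finite subsets of `V` (its faces). -/
structure SComplex (V : Type) [DecidableEq V] where
  faces : Finset (Finset V)
  down_closed : ∀ ⦃s t : Finset V⦄, s ∈ faces → t ⊆ s → t ∈ faces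

namespace SComplex

variable {V : Type} [DecidableEq V]

/-- `K.rank = d = dim k[Δ] = dim Δ + 1` is the maximal cardinality of a face of `K`. -/
def rank (K : SComplex V) : ℕ := K.faces.sup Finset.card

/-- `F` is a facet (maximal face) of `K`. -/
def IsFacet (K : SComplex V) (F : Finset V) : Prop :=
  F ∈ K.faces ∧ ∀ G ∈ K.faces, F ⊆ G → F = G

/-- `K` is pure: all facets have the maximal cardinality `K.rank`. -/
def Pure (K : SComplex V) : Prop := ∀ F : Finset V, K.IsFacet F → F.card = K.rank

/-- The link `lk_K(T) = {G ∈ K | T ∪ G ∈ K, T ∩ G = ∅}`. -/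
def link (K : SComplex V) (T : Finset V) : SComplex V where
  faces := K.faces.filter fun G => Disjoint T G ∧ T ∪ G ∈ K.faces
  down_closed := by
    intro s t hs hts
    simp only [Finset.mem_filter] at hs ⊢
    exact ⟨K.down_closed hs.1 hts, hs.2.1.mono_right hts,
      K.down_closed hs.2.2 (Finset.union_subset_union_right hts)⟩

/-- The anti-star `ast_K(T) = {G ∈ K | T ∩ G = ∅}`. -/
def antistar (K : SComplex V) (T : Finset V) : SComplex V where
  faces := K.faces.filter fun G => Disjoint T G
  down_closed := by
    intro s t hs hts
    simp only [Finset.mem_filter] at hs ⊢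
    exact ⟨K.down_closed hs.1 hts, hs.2.mono_right hts⟩

/-- The induced subcomplex of `K` on a set `W` of vertices. -/
def restrict (K : SComplex V) (W : Finset V) : SComplex V where
  faces := K.faces.filter fun G => G ⊆ W
  down_closed := by
    intro s t hs hts
    simp only [Finset.mem_filter] at hs ⊢
    exact ⟨K.down_closed hs.1 hts, hts.trans hs.2⟩

/-- The subcomplex of faces of cardinality at most `m`; as cardinality = dimension + 1, this is
the `(m-1)`-skeleton `Δ^{(m-1)}`. -/
def skelCard (K : SComplex V) (m : ℕ) : SComplex V where
  faces := K.faces.filter fun G => G.card ≤ m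
  down_closed := by
    intro s t hs hts
    simp only [Finset.mem_filter] at hs ⊢
    exact ⟨K.down_closed hs.1 hts, le_trans (Finset.card_le_card hts) hs.2⟩

/-- `K.trunc j` is `[Δ]_{>j}`, the order complex of the poset of faces of `K` of cardinality
(equivalently, of height in the face poset) `> j`: its faces are the chains of such faces.
For `j = 0` this is the barycentric subdivision of `K`. -/
def trunc (K : SComplex V) (j : ℕ) : SComplex (Finset V) where
  faces := K.faces.powerset.filter fun C =>
    (∀ s ∈ C, j < s.card) ∧ ∀ s ∈ C, ∀ t ∈ C, s ⊆ t ∨ t ⊆ s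
  down_closed := by
    intro s t hs hts
    simp only [Finset.mem_powerset, Finset.mem_filter] at hs ⊢
    exact ⟨hts.trans hs.1, fun a ha => hs.2.1 a (hts ha),
      fun a ha b hb => hs.2.2 a (hts ha) b (hts hb)⟩

/-- `Δ_A`: the complex obtained from `K` by deleting all faces containing a member of `A`. -/
def deleteAbove (K : SComplex V) (A : Finset (Finset V)) : SComplex V where
  faces := K.faces.filter fun s => ∀ τ ∈ A, ¬ τ ⊆ s
  down_closed := by
    intro s t hs hts
    simp only [Finset.mem_filter] at hs ⊢
    exact ⟨K.down_closed hs.1 hts, fun τ hτ hsub => hs.2 τ hτ (hsub.trans hts)⟩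

/-- The number of faces of `K` of cardinality `i`, i.e. the face number `f_{i-1}(K)`. -/
def faceCount (K : SComplex V) (i : ℕ) : ℕ := (K.faces.filter fun s => s.card = i).card

/-- The Euler characteristic `χ(K) = Σ_{i ≥ 0} (-1)^i f_i(K)`. -/
def eulerChar (K : SComplex V) : ℤ :=
  ∑ s ∈ K.faces.filter (fun s => s ≠ ∅), (-1 : ℤ) ^ (s.card - 1)

/-- The reduced Euler characteristic `χ̃(K) = χ(K) - 1`. -/
def reducedEulerChar (K : SComplex V) : ℤ := eulerChar K - 1

end SComplex

/-! ### Simplicial homology with coefficients in a field `k` -/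

/-- An arbitrary linear order on a finite type. -/
noncomputable def arbOrder (V : Type) [Fintype V] : LinearOrder V :=
  LinearOrder.lift' (Fintype.equivFin V) (Equiv.injective _)

namespace SComplex

variable {V : Type} [DecidableEq V]

/-- The faces of `K` of cardinality `n`, as a type. -/
def Faces (K : SComplex V) (n : ℕ) : Type :=
  {s : Finset V // s ∈ K.faces ∧ s.card = n}

/-- The space of reduced simplicial `n`-chains of `K`: formal `k`-linear combinations of the
faces of cardinality `n` (such a face has dimension `n - 1`; the empty face sits in degree `0`,
which produces *reduced* homology). -/
abbrev ChainsOf (k : Type) [Field k] (K : SComplex V) (n : ℕ) : Type := Faces K n →₀ k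

variable (k : Type) [Field k] [Fintype V]

/-- The simplicial boundary map, with signs determined by an arbitrary but fixed linear order
on the vertices. -/
noncomputable def bd (K : SComplex V) (n : ℕ) :
    ChainsOf k K n →ₗ[k] ChainsOf k K (n - 1) :=
  letI : LinearOrder V := arbOrder V
  Finsupp.lsum k fun s : Faces K n =>
    LinearMap.toSpanSingleton k (ChainsOf k K (n - 1))
      (∑ x ∈ s.1.attach,
        ((-1 : k) ^ (s.1.filter (fun y => y < x.1)).card) •
          Finsupp.single
            (⟨s.1.erase x.1,
              K.down_closed s.2.1 (Finset.erase_subset _ _),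
              by rw [Finset.card_erase_of_mem x.2, s.2.2]⟩ : Faces K (n - 1))
            (1 : k))

/-- `HVanish k K i` says that the reduced simplicial homology `H̃_{i-1}(K; k)` vanishes.
Note the indexing convention: the index `i` is the *cardinality* of the relevant faces, so this
is reduced homology in topological degree `i - 1`; e.g. `HVanish k K 1` says `H̃₀(K; k) = 0`
(`K` is connected and nonempty) and `HVanish k K 0` says `H̃₋₁(K; k) = 0` (`K` has a face).
Since the cycles in degree `i - 1` are `ker ∂ᵢ` and the boundaries are `im ∂ᵢ₊₁`, and the
boundaries are always contained in the cycles, vanishing of homology says exactly that every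
cycle is a boundary. -/
def HVanish (K : SComplex V) (i : ℕ) : Prop :=
  LinearMap.ker (bd k K i) ≤ LinearMap.range (bd k K (i + 1))

/-- `redHomologyRank k K i` is the dimension `dim_k H̃_{i-1}(K; k)` of the reduced simplicial
homology of `K` in topological degree `i - 1` (cardinality index `i`), namely the dimension of
the cycles `ker ∂ᵢ` modulo the boundaries `im ∂ᵢ₊₁`. -/
noncomputable def redHomologyRank (K : SComplex V) (i : ℕ) : ℕ :=
  Module.finrank k ↥(LinearMap.ker (bd k K i)) -
    Module.finrank k ↥(LinearMap.range (bd k K (i + 1)) ⊓ LinearMap.ker (bd k K i))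

end SComplex

/-! ### Depth, Serre conditions, and Stanley–Reisner rings -/

/-- The length of a longest regular sequence on `R` contained in the ideal `I`
(the `I`-depth of `R`). -/
noncomputable def depthIn (R : Type) [CommRing R] (I : Ideal R) : ℕ :=
  sSup {n : ℕ | ∃ rs : List R, rs.length = n ∧ (∀ r ∈ rs, r ∈ I) ∧
    RingTheory.Sequence.IsRegular R rs}

/-- Serre's condition `(S_ℓ)` for a commutative ring:
`depth R_p ≥ min {ℓ, dim R_p}` for every prime `p`. -/
def SerreCondS (ℓ : ℕ) (R : Type) [CommRing R] : Prop :=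
  ∀ (p : Ideal R) (hp : p.IsPrime),
    haveI := hp
    min ((ℓ : ℕ∞) : WithBot ℕ∞) (ringKrullDim (Localization.AtPrime p)) ≤
      ((depthIn (Localization.AtPrime p)
        (IsLocalRing.maximalIdeal (Localization.AtPrime p)) : ℕ∞) : WithBot ℕ∞)

namespace SComplex

variable {V : Type} [DecidableEq V] (k : Type) [Field k]

/-- The Stanley–Reisner ideal of `K`: generated by the squarefree monomials supported on
non-faces. -/
noncomputable def srIdeal (K : SComplex V) : Ideal (MvPolynomial V k) :=
  Ideal.span ((fun s : Finset V => ∏ v ∈ s, MvPolynomial.X v) '' {s : Finset V | s ∉ K.faces})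

/-- The Stanley–Reisner ring `k[Δ]`. -/
noncomputable abbrev SRRing (K : SComplex V) : Type := MvPolynomial V k ⧸ srIdeal k K

/-- `depth k[Δ]`: the depth of the Stanley–Reisner ring with respect to its irrelevant
(graded maximal) ideal. -/
noncomputable def srDepth (K : SComplex V) : ℕ :=
  depthIn (SRRing k K)
    (Ideal.span (Set.range fun v : V => Ideal.Quotient.mk (srIdeal k K) (MvPolynomial.X v)))

/-- `k[Δ]` satisfies Serre's condition `(S_ℓ)`. -/
def SerreS (ℓ : ℕ) (K : SComplex V) : Prop := SerreCondS ℓ (SRRing k K)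

end SComplex

/-! ### Order complexes of finite posets -/

/-- The order complex `O(P)` of a finite poset: its faces are the chains of `P`. -/
def orderComplex (P : Type) [DecidableEq P] [Fintype P] [PartialOrder P]
    [∀ a b : P, Decidable (a ≤ b)] : SComplex P where
  faces := Finset.univ.filter fun C : Finset P => ∀ a ∈ C, ∀ b ∈ C, a ≤ b ∨ b ≤ a
  down_closed := by
    intro s t hs hts
    simp only [Finset.mem_filter, Finset.mem_univ, true_and] at hs ⊢
    exact fun a ha b hb => hs a (hts ha) b (hts hb)

/-- The height of an element of a finite poset: the maximal cardinality of a chain with top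
element `p` (so minimal elements have height `1`). -/
def pheight {P : Type} [DecidableEq P] [Fintype P] [PartialOrder P]
    [∀ a b : P, Decidable (a ≤ b)] (p : P) : ℕ :=
  Finset.sup (Finset.univ.filter fun C : Finset P =>
    p ∈ C ∧ (∀ a ∈ C, a ≤ p) ∧ ∀ a ∈ C, ∀ b ∈ C, a ≤ b ∨ b ≤ a) Finset.card

/-- The height `ht P` of a finite poset: the maximal cardinality of a chain. -/
def pheightMax (P : Type) [DecidableEq P] [Fintype P] [PartialOrder P]
    [∀ a b : P, Decidable (a ≤ b)] : ℕ :=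
  Finset.univ.sup (pheight (P := P))

/-- `O(P_{>j})`: the full subcomplex of the order complex on the elements of height `> j`. -/
def ocAbove (P : Type) [DecidableEq P] [Fintype P] [PartialOrder P]
    [∀ a b : P, Decidable (a ≤ b)] (j : ℕ) : SComplex P :=
  (orderComplex P).restrict (Finset.univ.filter fun p => j < pheight p)

/-- The face poset `F(Δ)` of a simplicial complex: the nonempty faces, ordered by inclusion. -/
abbrev SComplex.FacePoset {V : Type} [DecidableEq V] (K : SComplex V) : Type :=
  {s : Finset V // s ∈ K.faces ∧ s ≠ ∅}

instance {V : Type} [DecidableEq V] (K : SComplex V) :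
    ∀ a b : K.FacePoset, Decidable (a ≤ b) := fun a b =>
  decidable_of_iff (a.1 ≤ b.1) Subtype.coe_le_coe

/-!
Write `x_σ = ∏_{v ∈ σ} x_v`. The kernel of `k[Δ] → k[Δ_A]` is generated by the `x_σ` with `σ ∈ A`,
and `x_σ x_τ = 0` for distinct `σ, τ ∈ A` since `A` is independent. As every facet contains a member
of `A`, the sum of the `x_σ` is a nonzerodivisor. Hence the kernel is the direct sum of the ideals
`x_σ k[Δ]`, and the height of a prime of `k[Δ_A]` grows by at least one when it is contracted to
`k[Δ]`. By the depth lemma for the localizations of `0 → ⨁ x_σ k[Δ] → k[Δ] → k[Δ_A] → 0`, it is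
enough to bound the depths of the localizations of the `x_σ k[Δ]`.

Multiplication by `x_σ` identifies `x_σ k[Δ]` with `k[star σ]`. For a prime `Q` of `k[star σ]`, the
automorphism `x_v ↦ 1 - x_v` (for those `v ∈ σ` with `x_v ∈ Q`) reduces to the case `x_σ ∉ Q`, where
`k[star σ]_Q` is a localization of `k[Δ]`; thus `k[star σ]` satisfies `(S_ℓ)`. Finally `(S_2)` makes
`Δ` pure, by connectedness of links, and in a pure complex the height of a prime of `k[star σ]` is
not smaller than that of its contraction to `k[Δ]`.
-/

/-! ### Depth over local rings -/

section Depth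

open RingTheory.Sequence IsLocalRing CategoryTheory CategoryTheory.Abelian

universe u

/-- `DepthGE L M n` says that `M` has depth at least `n` over the local ring `L`, in the form
`Ext^i(κ, M) = 0` for `i < n`, with `κ` the residue field. The zero module has infinite depth. -/
def DepthGE (L : Type u) [CommRing L] [IsLocalRing L] (M : Type u) [AddCommGroup M] [Module L M]
    (n : ℕ) : Prop :=
  ∀ i < n, Subsingleton (Ext (ModuleCat.of L (ResidueField L)) (ModuleCat.of L M) i)

variable {L : Type u} [CommRing L] [IsLocalRing L]
variable {M N P : Type u} [AddCommGroup M] [Module L M] [AddCommGroup N] [Module L N]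
  [AddCommGroup P] [Module L P]

namespace DepthGE

lemma mono {m n : ℕ} (h : DepthGE L M n) (hmn : m ≤ n) : DepthGE L M m :=
  fun i hi => h i (hi.trans_le hmn)

lemma of_subsingleton [Subsingleton M] (n : ℕ) : DepthGE L M n := by
  intro i _
  have hz : Limits.IsZero (ModuleCat.of L M) := ModuleCat.isZero_of_subsingleton _
  refine subsingleton_of_forall_eq 0 fun e => ?_
  rw [← Ext.comp_mk₀_id e, hz.eq_of_src (𝟙 _) 0, Ext.mk₀_zero, Ext.comp_zero]

lemma middle {f : M →ₗ[L] N} {g : N →ₗ[L] P} (hfg : Function.Exact f g)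
    (hf : Function.Injective f) (hg : Function.Surjective g) {n : ℕ}
    (hM : DepthGE L M n) (hP : DepthGE L P n) : DepthGE L N n := by
  intro i hi
  have exact := Ext.covariant_sequence_exact₂' (ModuleCat.of L (ResidueField L))
    (ModuleCat.shortComplex_shortExact
      (ModuleCat.shortComplexOfCompEqZero f g hfg.linearMap_comp_eq_zero) hfg hf hg) i
  have left := AddCommGrpCat.isZero_of_iff_subsingleton.mpr (hM i hi)
  have right := AddCommGrpCat.isZero_of_iff_subsingleton.mpr (hP i hi)
  exact AddCommGrpCat.subsingleton_of_isZero <|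
    exact.isZero_of_both_zeros (left.eq_zero_of_src _) (right.eq_zero_of_tgt _)

lemma right {f : M →ₗ[L] N} {g : N →ₗ[L] P} (hfg : Function.Exact f g)
    (hf : Function.Injective f) (hg : Function.Surjective g) {n : ℕ}
    (hM : DepthGE L M (n + 1)) (hN : DepthGE L N n) : DepthGE L P n := by
  intro i hi
  have exact := Ext.covariant_sequence_exact₃' (ModuleCat.of L (ResidueField L))
    (ModuleCat.shortComplex_shortExact
      (ModuleCat.shortComplexOfCompEqZero f g hfg.linearMap_comp_eq_zero) hfg hf hg) i (i + 1) rfl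
  have left := AddCommGrpCat.isZero_of_iff_subsingleton.mpr (hN i hi)
  have right := AddCommGrpCat.isZero_of_iff_subsingleton.mpr (hM (i + 1) (by omega))
  exact AddCommGrpCat.subsingleton_of_isZero <|
    exact.isZero_of_both_zeros (left.eq_zero_of_src _) (right.eq_zero_of_tgt _)

lemma congr (e : M ≃ₗ[L] N) {n : ℕ} (hM : DepthGE L M n) : DepthGE L N n :=
  middle (f := e.toLinearMap) (g := (0 : N →ₗ[L] PUnit.{u + 1})) (fun y => by simp)
    e.injective (fun y => ⟨0, Subsingleton.elim _ _⟩) hM (of_subsingleton n)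

lemma prod {n : ℕ} (hM : DepthGE L M n) (hN : DepthGE L N n) : DepthGE L (M × N) n :=
  middle (f := LinearMap.inl L M N) (g := LinearMap.snd L M N) Function.Exact.inl_snd
    LinearMap.inl_injective LinearMap.snd_surjective hM hN

lemma sup {N₁ N₂ : Submodule L M} (hdisj : Disjoint N₁ N₂) {n : ℕ} (h₁ : DepthGE L N₁ n)
    (h₂ : DepthGE L N₂ n) : DepthGE L ↥(N₁ ⊔ N₂) n := by
  have hinj : Function.Injective (N₁.subtype.coprod N₂.subtype) := by
    rw [← LinearMap.ker_eq_bot, LinearMap.ker_coprod_of_disjoint_range _ _ (by simpa using hdisj)]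
    simp
  have hrange : LinearMap.range (N₁.subtype.coprod N₂.subtype) = N₁ ⊔ N₂ := by
    rw [LinearMap.range_coprod, Submodule.range_subtype, Submodule.range_subtype]
  exact (h₁.prod h₂).congr ((LinearEquiv.ofInjective _ hinj).trans (LinearEquiv.ofEq _ _ hrange))

lemma finset_sup {ι : Type*} {s : Finset ι} {N : ι → Submodule L M} (hs : s.SupIndep N) {n : ℕ}
    (hN : ∀ i ∈ s, DepthGE L (N i) n) : DepthGE L ↥(s.sup N) n := by
  classical
  induction s using Finset.induction with
  | empty =>
    rw [Finset.sup_empty]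
    exact of_subsingleton n
  | insert i s hi ih =>
    rw [Finset.sup_insert]
    refine sup (hs (Finset.subset_insert i s) (Finset.mem_insert_self i s) hi)
      (hN i (Finset.mem_insert_self i s)) (ih (hs.subset (Finset.subset_insert i s)) fun j hj => ?_)
    exact hN j (Finset.mem_insert_of_mem hj)

end DepthGE

lemma support_residueField :
    Module.support L (ResidueField L) = PrimeSpectrum.zeroLocus (maximalIdeal L : Set L) := by
  rw [Module.support_eq_zeroLocus]
  exact congrArg _ (congrArg _ Ideal.annihilator_quotient)

lemma depthGE_iff_exists_isRegular [IsNoetherianRing L] [Module.Finite L M] [Nontrivial M]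
    {n : ℕ} : DepthGE L M n ↔
      ∃ rs : List L, rs.length = n ∧ (∀ r ∈ rs, r ∈ maximalIdeal L) ∧ IsRegular M rs := by
  have hlt : maximalIdeal L • (⊤ : Submodule L M) < ⊤ := lt_top_iff_ne_top.mpr
    (Submodule.top_ne_ideal_smul_of_le_jacobson_annihilator
      (maximalIdeal_le_jacobson _)).symm
  have : Module.Finite L (ModuleCat.of L (ResidueField L)) :=
    inferInstanceAs (Module.Finite L (ResidueField L))
  have : Module.Finite L (ModuleCat.of L M) := ‹Module.Finite L M›
  constructor
  · exact ModuleCat.exists_isRegular_of_exists_subsingleton_ext (maximalIdeal L) n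
      (ModuleCat.of L M) hlt _ support_residueField
  · rintro ⟨rs, rfl, mem, reg⟩
    exact ModuleCat.subsingleton_ext_of_exists_isRegular (maximalIdeal L) _
      support_residueField.subset (ModuleCat.of L M) hlt rs mem reg

omit [IsLocalRing L] in
open scoped Pointwise in
lemma dvd_of_dvd_mul_of_isRegular {f g : L} (h : IsRegular L [f, g]) {z : L} (hz : f ∣ g * z) :
    f ∣ z := by
  have hg := ((isWeaklyRegular_cons_iff _ g []).mp
    ((isWeaklyRegular_cons_iff L f [g]).mp h.toIsWeaklyRegular).2).1
  have hmem (y : L) : y ∈ f • (⊤ : Submodule L L) ↔ f ∣ y := by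
    simp [Submodule.mem_smul_pointwise_iff_exists, Dvd.dvd, eq_comm]
  rw [← hmem, ← Submodule.Quotient.mk_eq_zero] at hz ⊢
  exact hg.right_eq_zero_of_smul hz

-- Hartshorne's connectedness: a local ring of depth at least two has connected punctured spectrum.
lemma eq_bot_or_eq_bot_of_depthGE_two [IsNoetherianRing L] (h : DepthGE L L 2) {I J : Ideal L}
    (hIJ : ∀ x ∈ I, ∀ y ∈ J, x * y = 0) (hsup : maximalIdeal L ≤ I ⊔ J) : I = ⊥ ∨ J = ⊥ := by
  obtain ⟨rs, len, mem, reg⟩ := depthGE_iff_exists_isRegular.mp h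
  obtain ⟨f, g, rfl⟩ := List.length_eq_two.mp len
  have hf : IsSMulRegular L f := ((isWeaklyRegular_cons_iff L f [g]).mp reg.toIsWeaklyRegular).1
  obtain ⟨f₁, hf₁, f₂, hf₂, hff⟩ := Submodule.mem_sup.mp (hsup (mem f (by simp)))
  obtain ⟨g₁, hg₁, g₂, hg₂, hgg⟩ := Submodule.mem_sup.mp (hsup (mem g (by simp)))
  obtain ⟨c, hc⟩ : f ∣ f₂ := dvd_of_dvd_mul_of_isRegular reg ⟨g₂, by
    linear_combination (-f₂) * hgg + g₂ * hff + hIJ g₁ hg₁ f₂ hf₂ - hIJ f₁ hf₁ g₂ hg₂⟩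
  rcases isUnit_or_isUnit_one_sub_self c with hu | hu
  · left
    have hfJ : f ∈ J := (Ideal.mul_unit_mem_iff_mem J hu).mp (hc ▸ hf₂)
    exact (Submodule.eq_bot_iff _).mpr fun x hx =>
      hf.right_eq_zero_of_smul ((mul_comm f x).trans (hIJ x hx f hfJ))
  · right
    have hc₁ : f * (1 - c) = f₁ := by linear_combination hc - hff
    have hfI : f ∈ I := (Ideal.mul_unit_mem_iff_mem I hu).mp (hc₁ ▸ hf₁)
    exact (Submodule.eq_bot_iff _).mpr fun x hx => hf.right_eq_zero_of_smul (hIJ f hfI x hx)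

section Surjective

variable [IsNoetherianRing L] {T : Type u} [CommRing T] [IsLocalRing T]

lemma depthGE_iff_of_surjective [Algebra L T] [Module T M] [IsScalarTower L T M] [Module.Finite T M]
    (hs : Function.Surjective (algebraMap L T)) {n : ℕ} : DepthGE L M n ↔ DepthGE T M n := by
  cases subsingleton_or_nontrivial M
  · exact iff_of_true (.of_subsingleton n) (.of_subsingleton n)
  have := isNoetherianRing_of_surjective L T (algebraMap L T) hs
  have := IsLocalHom.of_surjective _ hs
  have : Module.Finite L T := .of_surjective (Algebra.linearMap L T) hs
  have : Module.Finite L M := .trans T M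
  have hmem (rs : List L) : (∀ r ∈ rs.map (algebraMap L T), r ∈ maximalIdeal T) ↔
      ∀ r ∈ rs, r ∈ maximalIdeal L := by
    simp [mem_maximalIdeal, mem_nonunits_iff]
  have hreg (rs : List L) (mem : ∀ r ∈ rs, r ∈ maximalIdeal L) :
      IsRegular M (rs.map (algebraMap L T)) ↔ IsRegular M rs := by
    rw [isRegular_iff_isWeaklyRegular_of_subset_maximalIdeal mem,
      isRegular_iff_isWeaklyRegular_of_subset_maximalIdeal ((hmem rs).mpr mem),
      isWeaklyRegular_map_algebraMap_iff]
  rw [depthGE_iff_exists_isRegular, depthGE_iff_exists_isRegular,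
    (List.map_surjective_iff.mpr hs).exists]
  refine exists_congr fun rs => ?_
  rw [List.length_map, hmem]
  exact and_congr_right fun _ => and_congr_right fun mem => (hreg rs mem).symm

lemma DepthGE.of_ker [Algebra L T] (hs : Function.Surjective (algebraMap L T)) {n : ℕ}
    (hker : DepthGE L (RingHom.ker (algebraMap L T)) (n + 1)) (hL : DepthGE L L n) :
    DepthGE T T n := by
  have hexact : Function.Exact (RingHom.ker (algebraMap L T)).subtype (Algebra.linearMap L T) :=
    fun z => by simp [RingHom.mem_ker]
  exact (depthGE_iff_of_surjective hs).mp
    (hker.right hexact (Submodule.injective_subtype _) hs hL)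

lemma DepthGE.of_ringEquiv (e : L ≃+* T) {n : ℕ} (h : DepthGE L L n) : DepthGE T T n := by
  let := (e : L →+* T).toAlgebra
  exact (depthGE_iff_of_surjective e.surjective).mp
    (h.congr (AlgEquiv.ofRingEquiv (R := L) (f := e) fun _ => rfl).toLinearEquiv)

end Surjective

lemma bddAbove_length_isRegular [IsNoetherianRing L] :
    BddAbove {n : ℕ | ∃ rs : List L, rs.length = n ∧ (∀ r ∈ rs, r ∈ maximalIdeal L) ∧
      IsRegular L rs} := by
  obtain ⟨d, hd⟩ := ENat.ne_top_iff_exists.mp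
    (Ideal.height_ne_top_of_isPrime (I := maximalIdeal L))
  refine ⟨d, ?_⟩
  rintro _ ⟨rs, rfl, -, reg⟩
  have : Nontrivial (L ⧸ Ideal.ofList rs) := Ideal.Quotient.nontrivial_iff.mpr fun htop =>
    reg.top_ne_smul (by rw [htop, Submodule.top_smul])
  have hle : ((rs.length : ℕ) : WithBot ℕ∞) ≤ (maximalIdeal L).height := by
    rw [maximalIdeal_height_eq_ringKrullDim,
      ← ringKrullDim_add_length_eq_ringKrullDim_of_isRegular rs reg]
    exact le_add_of_nonneg_left ringKrullDim_nonneg_of_nontrivial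
  rw [← hd] at hle
  exact_mod_cast hle

lemma le_depthIn_maximalIdeal_iff {L : Type} [CommRing L] [IsLocalRing L] [IsNoetherianRing L]
    {n : ℕ} : n ≤ depthIn L (maximalIdeal L) ↔ DepthGE L L n := by
  refine ⟨fun h => ?_, fun h =>
    le_csSup bddAbove_length_isRegular (depthGE_iff_exists_isRegular.mp h)⟩
  have hmem := Nat.sSup_mem (s := {n : ℕ | ∃ rs : List L, rs.length = n ∧
    (∀ r ∈ rs, r ∈ maximalIdeal L) ∧ IsRegular L rs})
    ⟨0, [], rfl, by simp, IsRegular.nil L L⟩ bddAbove_length_isRegular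
  exact (depthGE_iff_exists_isRegular.mpr hmem).mono h

end Depth

/-! ### Serre's condition -/

section SerreCondition

open nonZeroDivisors

universe u

lemma serreCondS_iff {ℓ : ℕ} {R : Type} [CommRing R] [IsNoetherianRing R] :
    SerreCondS ℓ R ↔ ∀ (p : Ideal R) [p.IsPrime] (n : ℕ), n ≤ ℓ → n ≤ p.height →
      DepthGE (Localization.AtPrime p) (Localization.AtPrime p) n := by
  refine forall_congr' fun p => forall_congr' fun hp => ?_
  have : IsNoetherianRing (Localization.AtPrime p) :=
    IsLocalization.isNoetherianRing p.primeCompl _ inferInstance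
  rw [IsLocalization.AtPrime.ringKrullDim_eq_height p (Localization.AtPrime p), ← WithBot.coe_min,
    WithBot.coe_le_coe, ← ENat.forall_natCast_le_iff_le]
  refine forall_congr' fun n => ?_
  rw [le_min_iff, Nat.cast_le, Nat.cast_le, le_depthIn_maximalIdeal_iff, and_imp]

lemma supIndep_span_singleton_of_sum_mem_nonZeroDivisors {R ι : Type*} [CommRing R] {a : ι → R}
    {s : Finset ι} (hmul : (s : Set ι).Pairwise fun i j => a i * a j = 0)
    (hsum : ∑ i ∈ s, a i ∈ R⁰) : s.SupIndep fun i => Ideal.span {a i} := by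
  intro t hts i hi hit
  rw [Submodule.disjoint_def]
  intro z hz hzt
  obtain ⟨c, rfl⟩ := Ideal.mem_span_singleton.mp hz
  have hle : t.sup (fun j => Ideal.span {a j}) ≤ Submodule.torsionBy R R (a i) :=
    Finset.sup_le fun j hj => (Ideal.span_singleton_le_iff_mem _).mpr
      (hmul hi (hts hj) fun hij => hit (hij ▸ hj))
  have hii : a i * (a i * c) = 0 := hle hzt
  refine (mem_nonZeroDivisors_iff.mp hsum).1 _ ?_
  rw [Finset.sum_mul]
  refine Finset.sum_eq_zero fun j hj => ?_
  rcases eq_or_ne j i with rfl | hji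
  · exact hii
  · rw [← mul_assoc, hmul hj hi hji, zero_mul]

section LocalizedQuotient

variable {R T : Type u} [CommRing R] [CommRing T] {f : R →+* T} (hf : Function.Surjective f)
  (Q : Ideal T) [Q.IsPrime]
include hf

lemma height_le_height_comap_of_surjective : Q.height ≤ (Q.comap f).height := by
  have hmono : StrictMono (PrimeSpectrum.comap f) :=
    Monotone.strictMono_of_injective (fun _ _ hab => Ideal.comap_mono hab)
      (PrimeSpectrum.comap_injective_of_surjective f hf)
  have := Order.height_le_height_apply_of_strictMono _ hmono ⟨Q, inferInstance⟩
  rwa [← PrimeSpectrum.height_eq_orderHeight, ← PrimeSpectrum.height_eq_orderHeight] at this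

lemma ker_localRingHom_of_surjective :
    RingHom.ker (Localization.localRingHom _ Q f rfl) =
      (RingHom.ker f).map (algebraMap R (Localization.AtPrime (Q.comap f))) :=
  IsLocalization.ker_map (M := (Q.comap f).primeCompl) (Localization.AtPrime Q) f
    (Submonoid.map_comap_eq_of_surjective hf Q.primeCompl)

lemma height_add_one_le_height_comap {r : R} (hr : r ∈ R⁰) (hfr : f r = 0) :
    Q.height + 1 ≤ (Q.comap f).height := by
  have hdim := ringKrullDim_succ_le_of_surjective (Localization.localRingHom _ Q f rfl)
    (RingHom.surjective_localRingHom_of_surjective f hf Q)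
    (IsLocalization.map_nonZeroDivisors_le (Q.comap f).primeCompl _
      (Submonoid.mem_map_of_mem (algebraMap R _) hr))
    (by rw [Localization.localRingHom_to_map, hfr, map_zero])
  rw [IsLocalization.AtPrime.ringKrullDim_eq_height (Q.comap f) (Localization.AtPrime (Q.comap f)),
    IsLocalization.AtPrime.ringKrullDim_eq_height Q (Localization.AtPrime Q)] at hdim
  exact_mod_cast hdim

variable {x : R} (hx : ∀ r, f r = 0 ↔ x * r = 0)
include hx

lemma localRingHom_eq_zero_iff (z : Localization.AtPrime (Q.comap f)) :
    Localization.localRingHom _ Q f rfl z = 0 ↔ algebraMap R _ x * z = 0 := by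
  obtain ⟨r, s, rfl⟩ := IsLocalization.exists_mk'_eq (Q.comap f).primeCompl z
  rw [Localization.localRingHom_mk', IsLocalization.mul_mk'_eq_mk'_of_mul,
    IsLocalization.mk'_eq_zero_iff, IsLocalization.mk'_eq_zero_iff, Subtype.exists,
    Subtype.exists, hf.exists]
  refine exists_congr fun t => exists_congr fun _ => ?_
  rw [← map_mul, hx, mul_left_comm]

lemma localRingHom_bijective (hxQ : f x ∉ Q) :
    Function.Bijective (Localization.localRingHom _ Q f rfl) := by
  refine ⟨(injective_iff_map_eq_zero _).mpr fun z hz => ?_,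
    RingHom.surjective_localRingHom_of_surjective f hf Q⟩
  have hunit : IsUnit (algebraMap R (Localization.AtPrime (Q.comap f)) x) :=
    IsLocalization.map_units _ (⟨x, hxQ⟩ : (Q.comap f).primeCompl)
  exact hunit.mul_right_eq_zero.mp ((localRingHom_eq_zero_iff hf Q hx z).mp hz)

end LocalizedQuotient

lemma depthGE_span_singleton {L T : Type u} [CommRing L] [IsLocalRing L] [IsNoetherianRing L]
    [CommRing T] [IsLocalRing T] {f : L →+* T} (hf : Function.Surjective f) {a : L}
    (ha : ∀ z, f z = 0 ↔ a * z = 0) {n : ℕ} (hT : DepthGE T T n) :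
    DepthGE L (Ideal.span {a}) n := by
  let := f.toAlgebra
  have hker : LinearMap.ker (Algebra.linearMap L T) =
      LinearMap.ker (LinearMap.toSpanSingleton L L a) := by
    ext z
    rw [LinearMap.mem_ker, LinearMap.mem_ker, Algebra.linearMap_apply,
      LinearMap.toSpanSingleton_apply, smul_eq_mul, mul_comm]
    exact ha z
  have e : T ≃ₗ[L] Ideal.span {a} :=
    ((Algebra.linearMap L T).quotKerEquivOfSurjective hf).symm ≪≫ₗ
      Submodule.quotEquivOfEq _ _ hker ≪≫ₗ (LinearMap.toSpanSingleton L L a).quotKerEquivRange ≪≫ₗ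
      LinearEquiv.ofEq _ _ (LinearMap.range_toSpanSingleton a)
  exact ((depthGE_iff_of_surjective hf).mpr hT).congr e

variable {R T : Type u} [CommRing R] [IsNoetherianRing R] [CommRing T] {f : R →+* T}

lemma depthGE_span_singleton_algebraMap (hf : Function.Surjective f) {x : R}
    (hx : ∀ r, f r = 0 ↔ x * r = 0) (P : Ideal R) [P.IsPrime] {n : ℕ}
    (hn : ∀ (Q : Ideal T) [Q.IsPrime], P = Q.comap f →
      DepthGE (Localization.AtPrime Q) (Localization.AtPrime Q) n) :
    DepthGE (Localization.AtPrime P) (Ideal.span {algebraMap R (Localization.AtPrime P) x}) n := by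
  have : IsNoetherianRing (Localization.AtPrime P) :=
    IsLocalization.isNoetherianRing P.primeCompl _ inferInstance
  by_cases hker : RingHom.ker f ≤ P
  · have hQ : (P.map f).IsPrime := Ideal.map_isPrime_of_surjective hf hker
    obtain ⟨Q, _, rfl⟩ : ∃ Q : Ideal T, Q.IsPrime ∧ P = Q.comap f :=
      ⟨P.map f, hQ, by rw [Ideal.comap_map_of_surjective' _ hf, sup_eq_left.mpr hker]⟩
    exact depthGE_span_singleton (RingHom.surjective_localRingHom_of_surjective f hf Q)
      (localRingHom_eq_zero_iff hf Q hx) (hn Q rfl)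
  · obtain ⟨r, hr, hrP⟩ := SetLike.not_le_iff_exists.mp hker
    have h0 : algebraMap R (Localization.AtPrime P) x = 0 :=
      (IsLocalization.map_eq_zero_iff P.primeCompl _ _).mpr
        ⟨⟨r, hrP⟩, (mul_comm _ _).trans ((hx r).mp hr)⟩
    rw [h0, Ideal.span_singleton_zero]
    exact .of_subsingleton n

lemma depthGE_localization_of_ker_eq_span (hf : Function.Surjective f) {ι : Type*} {a : ι → R}
    {s : Finset ι} (hker : RingHom.ker f = Ideal.span (a '' s))
    (hmul : (s : Set ι).Pairwise fun i j => a i * a j = 0) (hsum : ∑ i ∈ s, a i ∈ R⁰)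
    (Q : Ideal T) [Q.IsPrime] {n : ℕ}
    (hP : DepthGE (Localization.AtPrime (Q.comap f)) (Localization.AtPrime (Q.comap f)) n)
    (ha : ∀ i ∈ s, DepthGE (Localization.AtPrime (Q.comap f))
      (Ideal.span {algebraMap R (Localization.AtPrime (Q.comap f)) (a i)}) (n + 1)) :
    DepthGE (Localization.AtPrime Q) (Localization.AtPrime Q) n := by
  have : IsNoetherianRing (Localization.AtPrime (Q.comap f)) :=
    IsLocalization.isNoetherianRing (Q.comap f).primeCompl _ inferInstance
  set b : ι → Localization.AtPrime (Q.comap f) := fun i => algebraMap R _ (a i)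
  have hindep : s.SupIndep fun i => Ideal.span {b i} := by
    refine supIndep_span_singleton_of_sum_mem_nonZeroDivisors (fun i hi j hj hij => ?_) ?_
    · simp only [b, ← map_mul, hmul hi hj hij, map_zero]
    · rw [← map_sum]
      exact IsLocalization.map_nonZeroDivisors_le (Q.comap f).primeCompl _
        (Submonoid.mem_map_of_mem _ hsum)
  let := (Localization.localRingHom _ Q f rfl).toAlgebra
  have hkerb : RingHom.ker (algebraMap (Localization.AtPrime (Q.comap f))
      (Localization.AtPrime Q)) = s.sup fun i => Ideal.span {b i} := by
    rw [RingHom.algebraMap_toAlgebra, ker_localRingHom_of_surjective hf, hker, Ideal.map_span,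
      ← Set.image_comp, Finset.sup_eq_iSup, Ideal.span,
      Submodule.span_eq_iSup_of_singleton_spans, iSup_image]
    rfl
  refine DepthGE.of_ker (RingHom.surjective_localRingHom_of_surjective f hf Q) ?_ hP
  rw [hkerb]
  exact DepthGE.finset_sup hindep ha

lemma SerreCondS.of_ker_eq_span {R T : Type} [CommRing R] [IsNoetherianRing R] [CommRing T]
    {f : R →+* T} (hf : Function.Surjective f) {ι : Type*} {a : ι → R}
    {s : Finset ι} (hker : RingHom.ker f = Ideal.span (a '' s))
    (hmul : (s : Set ι).Pairwise fun i j => a i * a j = 0) (hsum : ∑ i ∈ s, a i ∈ R⁰) {ℓ : ℕ}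
    (hR : SerreCondS (ℓ + 1) R) {T' : ι → Type} [∀ i, CommRing (T' i)]
    {g : ∀ i, R →+* T' i} (hg : ∀ i, Function.Surjective (g i))
    (hga : ∀ i r, g i r = 0 ↔ a i * r = 0)
    (hT' : ∀ i ∈ s, ∀ (Q : Ideal (T' i)) [Q.IsPrime] (n : ℕ), n ≤ ℓ + 1 →
      n ≤ (Q.comap (g i)).height → DepthGE (Localization.AtPrime Q) (Localization.AtPrime Q) n) :
    SerreCondS ℓ T := by
  have := isNoetherianRing_of_surjective R T f hf
  refine serreCondS_iff.mpr fun Q _ n hn hnQ => ?_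
  have hfsum : f (∑ i ∈ s, a i) = 0 := by
    rw [← RingHom.mem_ker, hker]
    exact sum_mem fun i hi => Ideal.subset_span ⟨i, hi, rfl⟩
  have hheight : ((n + 1 : ℕ) : ℕ∞) ≤ (Q.comap f).height := by
    push_cast
    exact (add_le_add_left hnQ 1).trans (height_add_one_le_height_comap hf Q hsum hfsum)
  exact depthGE_localization_of_ker_eq_span hf hker hmul hsum Q
    ((serreCondS_iff.mp hR _ _ (Nat.succ_le_succ hn) hheight).mono n.le_succ)
    fun i hi => depthGE_span_singleton_algebraMap (hg i) (hga i) _ fun Q' _ hQ' =>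
      hT' i hi Q' _ (Nat.succ_le_succ hn) (hQ' ▸ hheight)

end SerreCondition

lemma comap_eq_comap_of_mkₐ_comp_eq {R A B : Type*} [CommSemiring R] [CommRing A] [Algebra R A]
    [CommRing B] [Algebra R B] {p : Ideal A} {f g : B →ₐ[R] A}
    (h : (Ideal.Quotient.mkₐ R p).comp f = (Ideal.Quotient.mkₐ R p).comp g) :
    p.comap f = p.comap g := by
  ext b
  rw [Ideal.mem_comap, Ideal.mem_comap, ← Ideal.Quotient.eq_zero_iff_mem,
    ← Ideal.Quotient.eq_zero_iff_mem]
  exact iff_of_eq (congrArg (· = 0) (DFunLike.congr_fun h b))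

lemma exists_equiv_of_card_eq {α : Type*} {F G : Finset α} (hcard : F.card = G.card)
    {p : α → Prop} (hF : ∀ v, p v → v ∈ F) (hG : ∀ v, p v → v ∈ G) :
    ∃ e : F ≃ G, ∀ v : F, (p v ∨ p (e v)) → (e v : α) = v := by
  obtain ⟨e, he⟩ := Set.MapsTo.exists_equiv_extend_of_card_eq (α := F)
    (t := G) (by simpa using hcard) (s := {v | p v}) (f := Subtype.val) (fun v hv => hG v hv)
    Subtype.val_injective.injOn
  refine ⟨e, fun v hv => hv.elim (he v) fun hev => ?_⟩
  have := e.injective (Subtype.ext (he ⟨e v, hF _ hev⟩ hev))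
  exact congrArg Subtype.val this

/-! ### Stanley–Reisner rings -/

namespace SComplex

variable {V : Type} [DecidableEq V] {k : Type} [Field k] {K K' : SComplex V}

lemma IsFacet.exists_superset {s : Finset V} (hs : s ∈ K.faces) : ∃ F, K.IsFacet F ∧ s ⊆ F := by
  obtain ⟨F, hsF, hF⟩ := K.faces.exists_le_maximal hs
  exact ⟨F, ⟨hF.prop, fun G hG h => h.antisymm (hF.le_of_ge hG h)⟩, hsF⟩

section StanleyReisner

open MvPolynomial nonZeroDivisors

/-- The class of the variable `x_v` in the Stanley–Reisner ring. -/
noncomputable def var (k : Type) [Field k] (K : SComplex V) (v : V) : SRRing k K :=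
  Ideal.Quotient.mk _ (X v)

/-- The class `x_s = ∏_{v ∈ s} x_v` in the Stanley–Reisner ring of the squarefree monomial
supported on `s`, for an arbitrary finite set `s` of vertices. -/
noncomputable def faceMonomial (k : Type) [Field k] (K : SComplex V) (s : Finset V) : SRRing k K :=
  ∏ v ∈ s, var k K v

lemma faceMonomial_eq_zero {s : Finset V} (hs : s ∉ K.faces) : faceMonomial k K s = 0 := by
  rw [faceMonomial]
  simp only [var]
  rw [← map_prod]
  exact Ideal.Quotient.eq_zero_iff_mem.mpr (Ideal.subset_span ⟨s, hs, rfl⟩)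

lemma var_eq_zero {v : V} (hv : {v} ∉ K.faces) : var k K v = 0 := by
  simpa [faceMonomial] using faceMonomial_eq_zero (k := k) hv

lemma faceMonomial_dvd_faceMonomial {s t : Finset V} (h : s ⊆ t) :
    faceMonomial k K s ∣ faceMonomial k K t :=
  Finset.prod_dvd_prod_of_subset _ _ _ h

lemma faceMonomial_mem_iff {s : Finset V} {p : Ideal (SRRing k K)} [p.IsPrime] :
    faceMonomial k K s ∈ p ↔ ∃ v ∈ s, var k K v ∈ p :=
  Ideal.IsPrime.prod_mem_iff

lemma aeval_var_eq_mkₐ : aeval (var k K) = Ideal.Quotient.mkₐ k (srIdeal k K) := by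
  ext v
  simp [var]

lemma mk_eq_zero_of_support {f : MvPolynomial V k} (hf : ∀ m ∈ f.support, m.support ∉ K.faces) :
    Ideal.Quotient.mk (srIdeal k K) f = 0 := by
  rw [← Ideal.Quotient.mkₐ_eq_mk k, ← aeval_var_eq_mkₐ, f.as_sum, map_sum]
  refine Finset.sum_eq_zero fun m hm => ?_
  have hdvd : faceMonomial k K m.support ∣ m.prod fun v n => var k K v ^ n :=
    Finset.prod_dvd_prod_of_dvd _ _ fun v hv => dvd_pow_self _ (Finsupp.mem_support_iff.mp hv)
  rw [faceMonomial_eq_zero (hf m hm), zero_dvd_iff] at hdvd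
  rw [aeval_monomial, hdvd, mul_zero]

section Lift

variable {B : Type*} [CommRing B] [Algebra k B]

lemma algHom_ext {f g : SRRing k K →ₐ[k] B} (h : ∀ v, f (var k K v) = g (var k K v)) : f = g := by
  apply Ideal.Quotient.algHom_ext
  ext v
  exact h v

/-- The universal property of the Stanley–Reisner ring: the `k`-algebra map with `x_v ↦ b v`. -/
noncomputable def lift (b : V → B) (hb : ∀ s ∉ K.faces, ∏ v ∈ s, b v = 0) : SRRing k K →ₐ[k] B :=
  Ideal.Quotient.liftₐ (srIdeal k K) (aeval b) fun f hf => by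
    have hle : srIdeal k K ≤ RingHom.ker (aeval b : MvPolynomial V k →ₐ[k] B) := by
      rw [srIdeal, Ideal.span_le]
      rintro _ ⟨s, hs, rfl⟩
      simp [hb s hs]
    exact hle hf

@[simp]
lemma lift_var (b : V → B) (hb : ∀ s ∉ K.faces, ∏ v ∈ s, b v = 0) (v : V) :
    lift b hb (var k K v) = b v :=
  aeval_X b v

end Lift

/-- The restriction `k[K] → k[x_v : v ∈ F]` to a face, which sends the other variables to `0`. -/
noncomputable def toFace (k : Type) [Field k] {F : Finset V} (hF : F ∈ K.faces) :
    SRRing k K →ₐ[k] MvPolynomial F k :=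
  lift (fun v => if h : v ∈ F then X ⟨v, h⟩ else 0) fun s hs => by
    obtain ⟨v, hv, hvF⟩ := Finset.not_subset.mp fun h => hs (K.down_closed hF h)
    exact Finset.prod_eq_zero hv (dif_neg hvF)

/-- The canonical map `k[x_v : v ∈ F] → k[K]`; it is a section of `toFace` when `F` is a face. -/
noncomputable def ofFace (k : Type) [Field k] (K : SComplex V) (F : Finset V) :
    MvPolynomial F k →ₐ[k] SRRing k K :=
  aeval fun v => var k K v

@[simp]
lemma ofFace_X {F : Finset V} (v : F) : ofFace k K F (X v) = var k K v :=
  aeval_X _ _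

section ToFace

variable {F : Finset V} (hF : F ∈ K.faces)

lemma toFace_var (v : V) : toFace k hF (var k K v) = if h : v ∈ F then X ⟨v, h⟩ else 0 :=
  lift_var _ _ v

lemma toFace_var_eq_zero_iff {v : V} : toFace k hF (var k K v) = 0 ↔ v ∉ F := by
  rw [toFace_var]
  split_ifs with h <;> simp [h]

lemma toFace_faceMonomial_eq_zero_iff {s : Finset V} :
    toFace k hF (faceMonomial k K s) = 0 ↔ ¬ s ⊆ F := by
  simp only [faceMonomial, map_prod, Finset.prod_eq_zero_iff, toFace_var_eq_zero_iff,
    Finset.not_subset]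

lemma toFace_mk (f : MvPolynomial V k) :
    toFace k hF (Ideal.Quotient.mk _ f) = killCompl (Subtype.val_injective (p := (· ∈ F))) f := by
  set κ : MvPolynomial V k →ₐ[k] MvPolynomial F k :=
    killCompl (Subtype.val_injective (p := (· ∈ F)))
  have hκ : (toFace k hF).comp (Ideal.Quotient.mkₐ k (srIdeal k K)) = κ := by
    refine MvPolynomial.algHom_ext fun v => (toFace_var hF v).trans ?_
    split_ifs with hv
    · simpa using (killCompl_rename_app (R := k) (Subtype.val_injective (p := (· ∈ F)))
        (X ⟨v, hv⟩)).symm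
    · simp [κ, killCompl, hv]
  exact DFunLike.congr_fun hκ f

@[simp]
lemma toFace_ofFace (f : MvPolynomial F k) : toFace k hF (ofFace k K F f) = f := by
  refine DFunLike.congr_fun (f := (toFace k hF).comp (ofFace k K F)) (g := AlgHom.id k _) ?_ f
  ext v
  simp [toFace_var]

lemma toFace_surjective : Function.Surjective (toFace k hF) :=
  fun f => ⟨_, toFace_ofFace hF f⟩

end ToFace

lemma eq_zero_of_toFace {f : SRRing k K} (h : ∀ F (hF : K.IsFacet F), toFace k hF.1 f = 0) :
    f = 0 := by
  obtain ⟨f, rfl⟩ := Ideal.Quotient.mk_surjective f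
  refine mk_eq_zero_of_support fun m hm hmK => ?_
  obtain ⟨F, hF, hmF⟩ := IsFacet.exists_superset hmK
  have hdom : (m.comapDomain Subtype.val Subtype.val_injective.injOn : F →₀ ℕ).mapDomain _ = m :=
    Finsupp.mapDomain_comapDomain _ Subtype.val_injective m
      (by simpa using Finset.coe_subset.mpr hmF)
  have hcoeff := congrArg (coeff (m.comapDomain Subtype.val Subtype.val_injective.injOn)) (h F hF)
  rw [toFace_mk, coeff_killCompl, hdom, coeff_zero] at hcoeff
  exact mem_support_iff.mp hm hcoeff

lemma adjoin_range_var : Algebra.adjoin k (Set.range (var k K)) = ⊤ := by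
  rw [Algebra.adjoin_range_eq_range_aeval, aeval_var_eq_mkₐ, AlgHom.range_eq_top]
  exact Ideal.Quotient.mkₐ_surjective _ _

-- `V` may be infinite, but only the vertices of `K` contribute.
instance (K : SComplex V) : IsNoetherianRing (SRRing k K) := by
  have hrange : (ofFace k K (K.faces.sup id)).range = ⊤ := by
    rw [eq_top_iff, ← adjoin_range_var, Algebra.adjoin_le_iff]
    rintro _ ⟨v, rfl⟩
    by_cases hv : {v} ∈ K.faces
    · exact ⟨X ⟨v, Finset.mem_sup.mpr ⟨{v}, hv, by simp⟩⟩, ofFace_X _⟩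
    · rw [var_eq_zero hv]
      exact zero_mem _
  exact isNoetherianRing_of_surjective _ _ (ofFace k K (K.faces.sup id)).toRingHom
    (AlgHom.range_eq_top _ |>.mp hrange)

lemma faceMonomial_mul_eq_zero {s t : Finset V} (h : s ∪ t ∉ K.faces) :
    faceMonomial k K s * faceMonomial k K t = 0 := by
  rw [← zero_dvd_iff, ← faceMonomial_eq_zero h, ← Finset.sdiff_union_self_eq_union]
  conv_lhs => rw [faceMonomial, Finset.prod_union Finset.sdiff_disjoint]
  exact mul_dvd_mul_right (faceMonomial_dvd_faceMonomial Finset.sdiff_subset) _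

lemma sum_faceMonomial_mem_nonZeroDivisors {A : Finset (Finset V)}
    (hindep : ∀ σ ∈ A, ∀ τ ∈ A, σ ≠ τ → σ ∪ τ ∉ K.faces)
    (hexc : ∀ F : Finset V, K.IsFacet F → ∃ σ ∈ A, σ ⊆ F) :
    ∑ σ ∈ A, faceMonomial k K σ ∈ (SRRing k K)⁰ := by
  refine mem_nonZeroDivisors_iff_right.mpr fun f hf => eq_zero_of_toFace fun F hF => ?_
  obtain ⟨σ, hσ, hσF⟩ := hexc F hF
  have hsum : toFace k hF.1 (∑ σ ∈ A, faceMonomial k K σ) = toFace k hF.1 (faceMonomial k K σ) := by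
    rw [map_sum, Finset.sum_eq_single_of_mem σ hσ]
    intro τ hτ hne
    exact (toFace_faceMonomial_eq_zero_iff hF.1).mpr fun hτF =>
      hindep τ hτ σ hσ hne (K.down_closed hF.1 (Finset.union_subset hτF hσF))
  have hprod := congrArg (toFace k hF.1) hf
  rw [map_mul, hsum, map_zero] at hprod
  exact (mul_eq_zero.mp hprod).resolve_right
    fun h => (toFace_faceMonomial_eq_zero_iff hF.1).mp h hσF

/-- The projection `k[K] → k[K']` onto the Stanley–Reisner ring of a subcomplex. -/
noncomputable def toSubcomplex (k : Type) [Field k] (h : K'.faces ⊆ K.faces) :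
    SRRing k K →ₐ[k] SRRing k K' :=
  lift (var k K') fun _ hs => faceMonomial_eq_zero fun hs' => hs (h hs')

section ToSubcomplex

variable (h : K'.faces ⊆ K.faces)

@[simp]
lemma toSubcomplex_var (v : V) : toSubcomplex k h (var k K v) = var k K' v :=
  lift_var _ _ v

@[simp]
lemma toSubcomplex_faceMonomial (s : Finset V) :
    toSubcomplex k h (faceMonomial k K s) = faceMonomial k K' s := by
  simp [faceMonomial]

lemma toSubcomplex_comp_ofFace (F : Finset V) :
    (toSubcomplex k h).comp (ofFace k K F) = ofFace k K' F := by
  ext v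
  simp

lemma toFace_toSubcomplex {F : Finset V} (hF : F ∈ K'.faces) (f : SRRing k K) :
    toFace k hF (toSubcomplex k h f) = toFace k (h hF) f := by
  refine DFunLike.congr_fun (f := (toFace k hF).comp (toSubcomplex k h)) ?_ f
  refine algHom_ext fun v => ?_
  simp [toFace_var]

lemma toSubcomplex_surjective : Function.Surjective (toSubcomplex k h) := by
  rw [← AlgHom.range_eq_top, eq_top_iff, ← adjoin_range_var, Algebra.adjoin_le_iff]
  rintro _ ⟨v, rfl⟩
  exact ⟨var k K v, toSubcomplex_var h v⟩

lemma ker_toSubcomplex :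
    RingHom.ker (toSubcomplex k h) = Ideal.span (faceMonomial k K '' {s | s ∉ K'.faces}) := by
  set J := Ideal.span (faceMonomial k K '' {s | s ∉ K'.faces})
  refine le_antisymm (fun f hf => ?_) (Ideal.span_le.mpr ?_)
  · let g : SRRing k K' →ₐ[k] SRRing k K ⧸ J :=
      lift (fun v => Ideal.Quotient.mk J (var k K v)) fun s hs => by
        rw [← map_prod]
        exact Ideal.Quotient.eq_zero_iff_mem.mpr (Ideal.subset_span ⟨s, hs, rfl⟩)
    have hg : g.comp (toSubcomplex k h) = Ideal.Quotient.mkₐ k J := by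
      refine algHom_ext (B := SRRing k K ⧸ J) fun v => ?_
      simp [g]
    rw [← Ideal.Quotient.eq_zero_iff_mem, ← Ideal.Quotient.mkₐ_eq_mk k, ← hg, AlgHom.comp_apply,
      RingHom.mem_ker.mp hf, map_zero]
  · rintro _ ⟨s, hs, rfl⟩
    exact (toSubcomplex_faceMonomial h s).trans (faceMonomial_eq_zero hs)

end ToSubcomplex

lemma deleteAbove_faces_subset (A : Finset (Finset V)) : (K.deleteAbove A).faces ⊆ K.faces :=
  Finset.filter_subset _ _

lemma ker_toSubcomplex_deleteAbove (A : Finset (Finset V)) :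
    RingHom.ker (toSubcomplex k (K.deleteAbove_faces_subset A)) =
      Ideal.span (faceMonomial k K '' (A : Set (Finset V))) := by
  rw [ker_toSubcomplex]
  refine le_antisymm (Ideal.span_le.mpr ?_) (Ideal.span_mono (Set.image_mono fun τ hτ hmem => ?_))
  · rintro _ ⟨s, hs, rfl⟩
    by_cases hsK : s ∈ K.faces
    · obtain ⟨τ, hτ, hτs⟩ : ∃ τ ∈ A, τ ⊆ s := by
        by_contra! h
        exact hs (Finset.mem_filter.mpr ⟨hsK, h⟩)
      exact Ideal.mem_of_dvd _ (faceMonomial_dvd_faceMonomial hτs)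
        (Ideal.subset_span ⟨τ, hτ, rfl⟩)
    · rw [faceMonomial_eq_zero hsK]
      exact zero_mem _
  · exact (Finset.mem_filter.mp hmem).2 τ hτ subset_rfl

/-- The closed star of `σ`, the subcomplex of the faces `s` such that `σ ∪ s` is a face; it has no
faces at all if `σ` is not a face. -/
def closedStar (K : SComplex V) (σ : Finset V) : SComplex V where
  faces := K.faces.filter fun s => σ ∪ s ∈ K.faces
  down_closed := by
    intro s t hs hts
    simp only [Finset.mem_filter] at hs ⊢
    exact ⟨K.down_closed hs.1 hts, K.down_closed hs.2 (Finset.union_subset_union_right hts)⟩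

lemma closedStar_faces_subset (σ : Finset V) : (K.closedStar σ).faces ⊆ K.faces :=
  Finset.filter_subset _ _

lemma mem_closedStar_iff {σ s : Finset V} : s ∈ (K.closedStar σ).faces ↔ σ ∪ s ∈ K.faces := by
  simp only [closedStar, Finset.mem_filter, and_iff_right_iff_imp]
  exact fun h => K.down_closed h Finset.subset_union_right

lemma IsFacet.subset_of_closedStar {σ F : Finset V} (hF : (K.closedStar σ).IsFacet F) : σ ⊆ F := by
  have hσF : σ ∪ F ∈ (K.closedStar σ).faces := by
    rw [mem_closedStar_iff, ← Finset.union_assoc, Finset.union_self]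
    exact mem_closedStar_iff.mp hF.1
  exact Finset.union_eq_right.mp (hF.2 _ hσF Finset.subset_union_right).symm

lemma IsFacet.of_closedStar {σ F : Finset V} (hF : (K.closedStar σ).IsFacet F) : K.IsFacet F := by
  refine ⟨K.closedStar_faces_subset σ hF.1, fun G hG hFG => hF.2 G ?_ hFG⟩
  rwa [mem_closedStar_iff, Finset.union_eq_right.mpr (hF.subset_of_closedStar.trans hFG)]

lemma toSubcomplex_closedStar_eq_zero_iff {σ : Finset V} {f : SRRing k K} :
    toSubcomplex k (K.closedStar_faces_subset σ) f = 0 ↔ faceMonomial k K σ * f = 0 := by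
  constructor
  · refine fun hf => eq_zero_of_toFace fun F hF => ?_
    rw [map_mul]
    by_cases hσF : σ ⊆ F
    · have hFσ : F ∈ (K.closedStar σ).faces :=
        mem_closedStar_iff.mpr (by rw [Finset.union_eq_right.mpr hσF]; exact hF.1)
      rw [← toFace_toSubcomplex (K.closedStar_faces_subset σ) hFσ f, hf, map_zero, mul_zero]
    · rw [(toFace_faceMonomial_eq_zero_iff hF.1).mpr hσF, zero_mul]
  · refine fun hf => eq_zero_of_toFace fun F hF => ?_
    have hprod := congrArg (toFace k hF.of_closedStar.1) hf
    rw [map_mul, map_zero] at hprod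
    rw [toFace_toSubcomplex]
    exact (mul_eq_zero.mp hprod).resolve_left fun h =>
      (toFace_faceMonomial_eq_zero_iff hF.of_closedStar.1).mp h hF.subset_of_closedStar

end StanleyReisner

/-! ### Heights of primes in Stanley–Reisner rings -/

section Height

open MvPolynomial

lemma exists_isFacet_var_mem (p : Ideal (SRRing k K)) [p.IsPrime] :
    ∃ F, K.IsFacet F ∧ ∀ v ∉ F, var k K v ∈ p := by
  classical
  set τ := (K.faces.sup id).filter fun v => var k K v ∉ p
  have hτ : τ ∈ K.faces := by
    by_contra hτ
    obtain ⟨v, hv, hvp⟩ := (faceMonomial_mem_iff (p := p)).mp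
      (faceMonomial_eq_zero (k := k) hτ ▸ zero_mem p)
    exact (Finset.mem_filter.mp hv).2 hvp
  obtain ⟨F, hF, hτF⟩ := IsFacet.exists_superset hτ
  refine ⟨F, hF, fun v hv => ?_⟩
  by_cases hvK : {v} ∈ K.faces
  · by_contra hvp
    exact hv (hτF (Finset.mem_filter.mpr ⟨Finset.mem_sup.mpr ⟨{v}, hvK, by simp⟩, hvp⟩))
  · rw [var_eq_zero hvK]
    exact zero_mem p

section OutsideVariables

variable {F : Finset V} (hF : F ∈ K.faces)

lemma comap_toFace_comap_ofFace {p : Ideal (SRRing k K)} (hp : ∀ v ∉ F, var k K v ∈ p) :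
    (p.comap (ofFace k K F)).comap (toFace k hF) = p := by
  refine comap_eq_comap_of_mkₐ_comp_eq (f := (ofFace k K F).comp (toFace k hF))
    (g := AlgHom.id k _) (algHom_ext (B := SRRing k K ⧸ p) fun v => ?_)
  by_cases hv : v ∈ F
  · simp [toFace_var, hv]
  · simpa [toFace_var, hv] using (Ideal.Quotient.eq_zero_iff_mem.mpr (hp v hv)).symm

include hF in
lemma height_comap_ofFace_le {p : Ideal (SRRing k K)} [p.IsPrime]
    (hp : ∀ v ∉ F, var k K v ∈ p) : (p.comap (ofFace k K F)).height ≤ p.height := by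
  conv_rhs => rw [← comap_toFace_comap_ofFace hF hp]
  exact height_le_height_comap_of_surjective (f := (toFace k hF).toRingHom)
    (toFace_surjective hF) _

include hF in
lemma comap_ofFace_lt_comap_ofFace {p q : Ideal (SRRing k K)} (hq : ∀ v ∉ F, var k K v ∈ q)
    (hqp : q < p) : q.comap (ofFace k K F) < p.comap (ofFace k K F) := by
  refine lt_of_le_of_ne (Ideal.comap_mono hqp.le) fun heq => hqp.ne ?_
  rw [← comap_toFace_comap_ofFace hF hq, heq,
    comap_toFace_comap_ofFace hF fun v hv => hqp.le (hq v hv)]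

end OutsideVariables

lemma exists_isFacet_le_height_comap_ofFace (p : Ideal (SRRing k K)) [hp : p.IsPrime] {n : ℕ}
    (hn : n ≤ p.height) :
    ∃ F, K.IsFacet F ∧ (∀ v ∉ F, var k K v ∈ p) ∧ n ≤ (p.comap (ofFace k K F)).height := by
  induction n generalizing p with
  | zero =>
    obtain ⟨F, hF, hvar⟩ := exists_isFacet_var_mem p
    exact ⟨F, hF, hvar, zero_le⟩
  | succ n ih =>
    have hlt : (n : ℕ∞) < Order.height (⟨p, hp⟩ : PrimeSpectrum (SRRing k K)) := by
      rw [← PrimeSpectrum.height_eq_orderHeight]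
      exact (Nat.cast_lt.mpr n.lt_succ_self).trans_le hn
    obtain ⟨q, hqp, hq⟩ := (Order.coe_lt_height_iff (by
      rw [← PrimeSpectrum.height_eq_orderHeight]
      exact Ideal.height_lt_top hp.ne_top)).mp hlt
    rw [← PrimeSpectrum.height_eq_orderHeight] at hq
    obtain ⟨F, hF, hvar, hle⟩ := ih q.asIdeal hq.ge
    refine ⟨F, hF, fun v hv => hqp.le (hvar v hv), ?_⟩
    have hstep := Ideal.height_add_one_le_of_lt_of_isPrime
      (comap_ofFace_lt_comap_ofFace hF.1 hvar (show q.asIdeal < p from hqp))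
    push_cast
    exact (add_le_add_left hle 1).trans hstep

lemma height_comap_ofFace_eq {p : Ideal (SRRing k K)} {F G : Finset V} (hcard : F.card = G.card)
    (hF : ∀ v ∉ F, var k K v ∈ p) (hG : ∀ v ∉ G, var k K v ∈ p) :
    (p.comap (ofFace k K F)).height = (p.comap (ofFace k K G)).height := by
  obtain ⟨e, he⟩ := exists_equiv_of_card_eq hcard (p := fun v => var k K v ∉ p)
    (fun v => not_imp_comm.mp (hF v)) (fun v => not_imp_comm.mp (hG v))
  have hcomap : p.comap (ofFace k K F) =
      p.comap ((ofFace k K G).comp (renameEquiv k e).toAlgHom) := by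
    refine comap_eq_comap_of_mkₐ_comp_eq (MvPolynomial.algHom_ext fun v => ?_)
    by_cases hv : var k K v ∈ p ∧ var k K (e v) ∈ p
    · simp [Ideal.Quotient.eq_zero_iff_mem.mpr hv.1, Ideal.Quotient.eq_zero_iff_mem.mpr hv.2]
    · simp [he v (not_and_or.mp hv)]
  rw [hcomap, ← Ideal.comap_comapₐ]
  exact RingEquiv.height_comap (renameEquiv k e).toRingEquiv _

lemma height_comap_toSubcomplex_closedStar_le
    (hpure : ∀ F G, K.IsFacet F → K.IsFacet G → F.card = G.card)
    (σ : Finset V) (q : Ideal (SRRing k (K.closedStar σ))) [q.IsPrime] :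
    (q.comap (toSubcomplex k (K.closedStar_faces_subset σ))).height ≤ q.height := by
  set p := q.comap (toSubcomplex k (K.closedStar_faces_subset σ))
  obtain ⟨n, hn⟩ := ENat.ne_top_iff_exists.mp (Ideal.height_ne_top_of_isPrime (I := p))
  obtain ⟨F, hF, hvF, hle⟩ := exists_isFacet_le_height_comap_ofFace p hn.le
  obtain ⟨G, hG, hvG⟩ := exists_isFacet_var_mem q
  have hvG' : ∀ v ∉ G, var k K v ∈ p := fun v hv => by
    rw [Ideal.mem_comap, toSubcomplex_var]
    exact hvG v hv
  calc p.height ≤ (p.comap (ofFace k K F)).height := hn ▸ hle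
    _ = (p.comap (ofFace k K G)).height :=
      height_comap_ofFace_eq (hpure _ _ hF hG.of_closedStar) hvF hvG'
    _ = (q.comap (ofFace k (K.closedStar σ) G)).height := by
      rw [Ideal.comap_comapₐ, toSubcomplex_comp_ofFace]
    _ ≤ q.height := height_comap_ofFace_le hG.1 hvG

end Height

/-! ### Purity of complexes satisfying `(S_2)` -/

section Purity

/-- The prime ideal `(x_v : v ∉ F)` of a face `F`, encoded as the kernel of the restriction
to `F`. -/
noncomputable def facePrime (k : Type) [Field k] {F : Finset V} (hF : F ∈ K.faces) :
    Ideal (SRRing k K) :=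
  RingHom.ker (toFace k hF)

variable {F G : Finset V} (hF : F ∈ K.faces)

instance : (facePrime k hF).IsPrime :=
  RingHom.ker_isPrime _

lemma var_mem_facePrime_iff {v : V} : var k K v ∈ facePrime k hF ↔ v ∉ F :=
  toFace_var_eq_zero_iff hF

lemma faceMonomial_mem_facePrime_iff {s : Finset V} :
    faceMonomial k K s ∈ facePrime k hF ↔ ¬ s ⊆ F :=
  toFace_faceMonomial_eq_zero_iff hF

lemma facePrime_le {p : Ideal (SRRing k K)} (hp : ∀ v ∉ F, var k K v ∈ p) :
    facePrime k hF ≤ p := by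
  rw [← comap_toFace_comap_ofFace hF hp]
  exact Ideal.ker_le_comap _

lemma facePrime_anti (hG : G ∈ K.faces) (h : F ⊆ G) : facePrime k hG ≤ facePrime k hF :=
  facePrime_le hG fun _ hv => (var_mem_facePrime_iff hF).mpr fun hvF => hv (h hvF)

lemma facePrime_strictAnti (hG : G ∈ K.faces) (h : F ⊂ G) :
    facePrime k hG < facePrime k hF := by
  refine lt_of_le_not_ge (facePrime_anti hF hG h.subset) fun hle => ?_
  obtain ⟨v, hvG, hvF⟩ := Finset.exists_of_ssubset h
  exact (var_mem_facePrime_iff hG).mp (hle ((var_mem_facePrime_iff hF).mpr hvF)) hvG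

lemma le_height_facePrime (hG : G ∈ K.faces) (h : F ⊆ G) {n : ℕ}
    (hcard : F.card + n ≤ G.card) : n ≤ (facePrime k hF).height := by
  induction n generalizing F with
  | zero => exact zero_le
  | succ n ih =>
    obtain ⟨v, hvG, hvF⟩ := Finset.exists_mem_notMem_of_card_lt_card (show F.card < G.card by omega)
    have hsub : insert v F ⊆ G := Finset.insert_subset hvG h
    have hv : insert v F ∈ K.faces := K.down_closed hG hsub
    have hle : n ≤ (facePrime k hv).height :=
      ih hv hsub (by rw [Finset.card_insert_of_notMem hvF]; omega)
    push_cast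
    exact (add_le_add_left hle 1).trans (Ideal.height_add_one_le_of_lt_of_isPrime
      (facePrime_strictAnti hF hv (Finset.ssubset_insert hvF)))

lemma algebraMap_faceMonomial_eq_zero_iff {s : Finset V} :
    algebraMap _ (Localization.AtPrime (facePrime k hF)) (faceMonomial k K s) = 0 ↔
      F ∪ s ∉ K.faces := by
  rw [IsLocalization.map_eq_zero_iff (facePrime k hF).primeCompl]
  refine ⟨fun ⟨⟨f, hf⟩, hfs⟩ hFs => ?_, fun h =>
    ⟨⟨_, (faceMonomial_mem_facePrime_iff hF).not.mpr (not_not.mpr subset_rfl)⟩,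
      faceMonomial_mul_eq_zero h⟩⟩
  have hmem : f * faceMonomial k K s ∈ facePrime k hFs := by
    rw [show f * faceMonomial k K s = 0 from hfs]
    exact zero_mem _
  refine hf (facePrime_anti hF hFs Finset.subset_union_left
    ((Ideal.IsPrime.mem_or_mem inferInstance hmem).resolve_right fun hs => ?_))
  exact (faceMonomial_mem_facePrime_iff hFs).mp hs Finset.subset_union_right

-- Geometrically: the link of `τ` is connected.
lemma union_singleton_notMem_or_of_depthGE_two {τ : Finset V} (hτ : τ ∈ K.faces)
    (hdepth : DepthGE (Localization.AtPrime (facePrime k hτ))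
      (Localization.AtPrime (facePrime k hτ)) 2)
    {U W : Set V} (hcover : ∀ v ∉ τ, τ ∪ {v} ∈ K.faces → v ∈ U ∨ v ∈ W)
    (hsep : ∀ u ∈ U, ∀ w ∈ W, τ ∪ {u, w} ∉ K.faces) :
    (∀ u ∈ U, τ ∪ {u} ∉ K.faces) ∨ (∀ w ∈ W, τ ∪ {w} ∉ K.faces) := by
  set a : V → Localization.AtPrime (facePrime k hτ) := fun v => algebraMap _ _ (var k K v)
  have ha (v : V) : a v = 0 ↔ τ ∪ {v} ∉ K.faces := by
    rw [← algebraMap_faceMonomial_eq_zero_iff (k := k) hτ, faceMonomial, Finset.prod_singleton]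
  have hmul (u) (hu : u ∈ U) (w) (hw : w ∈ W) : a u * a w = 0 := by
    have huw := hsep u hu w hw
    rcases eq_or_ne u w with rfl | hne
    · rw [Finset.pair_eq_singleton, ← ha] at huw
      rw [huw, zero_mul]
    · rwa [← algebraMap_faceMonomial_eq_zero_iff (k := k) hτ, faceMonomial, Finset.prod_pair hne,
        map_mul] at huw
  have hIJ : ∀ x ∈ Ideal.span (a '' U), ∀ y ∈ Ideal.span (a '' W), x * y = 0 := by
    have hle : Ideal.span (a '' U) * Ideal.span (a '' W) ≤ ⊥ := by
      rw [Ideal.span_mul_span', Ideal.span_le]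
      rintro _ ⟨_, ⟨u, hu, rfl⟩, _, ⟨w, hw, rfl⟩, rfl⟩
      exact hmul u hu w hw
    exact fun x hx y hy => hle (Ideal.mul_mem_mul hx hy)
  have hsup : IsLocalRing.maximalIdeal _ ≤ Ideal.span (a '' U) ⊔ Ideal.span (a '' W) := by
    rw [← IsLocalization.AtPrime.map_eq_maximalIdeal (facePrime k hτ), Ideal.map_le_iff_le_comap,
      ← Ideal.span_union, ← Set.image_union]
    refine facePrime_le hτ fun v hv => ?_
    by_cases hvτ : τ ∪ {v} ∈ K.faces
    · exact Ideal.subset_span ⟨v, hcover v hv hvτ, rfl⟩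
    · change a v ∈ Ideal.span (a '' (U ∪ W))
      rw [(ha v).mpr hvτ]
      exact zero_mem _
  simp only [← ha]
  exact (eq_bot_or_eq_bot_of_depthGE_two hdepth hIJ hsup).imp
    (fun h u hu => Ideal.span_eq_bot.mp h _ (Set.mem_image_of_mem a hu))
    (fun h w hw => Ideal.span_eq_bot.mp h _ (Set.mem_image_of_mem a hw))

lemma IsFacet.not_subset (hF : K.IsFacet F) (hG : G ∈ K.faces) (hne : F ≠ G) {τ : Finset V}
    (hτG : τ ⊆ G) : ¬ F ⊆ τ :=
  fun h => hne (hF.2 G hG (h.trans hτG))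

lemma exists_ssubset_inter_of_depthGE_two {τ : Finset V} (hτ : τ ∈ K.faces)
    (hdepth : DepthGE (Localization.AtPrime (facePrime k hτ))
      (Localization.AtPrime (facePrime k hτ)) 2)
    {p : Finset V → Prop} (hF : K.IsFacet F) (hG : K.IsFacet G) (hτF : τ ⊆ F) (hτG : τ ⊆ G)
    (hpF : p F) (hpG : ¬ p G) :
    ∃ F' G', K.IsFacet F' ∧ K.IsFacet G' ∧ p F' ∧ ¬ p G' ∧ τ ⊂ F' ∩ G' := by
  by_contra! hcon
  have hinter {F' G' : Finset V} {v : V} (hF' : K.IsFacet F' ∧ τ ⊆ F' ∧ v ∈ F')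
      (hG' : K.IsFacet G' ∧ τ ⊆ G' ∧ v ∈ G') (hpF' : p F') (hpG' : ¬ p G') : v ∈ τ := by
    by_contra hv
    exact hcon F' G' hF'.1 hG'.1 hpF' hpG' ((Finset.ssubset_iff_of_subset
      (Finset.subset_inter hF'.2.1 hG'.2.1)).mpr ⟨v, Finset.mem_inter.mpr ⟨hF'.2.2, hG'.2.2⟩, hv⟩)
  have hne : F ≠ G := by
    rintro rfl
    exact hpG hpF
  set U : Set V := {v | v ∉ τ ∧ ∃ H, (K.IsFacet H ∧ τ ⊆ H ∧ v ∈ H) ∧ p H}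
  set W : Set V := {v | v ∉ τ ∧ ∃ H, (K.IsFacet H ∧ τ ⊆ H ∧ v ∈ H) ∧ ¬ p H}
  have hcover (v) (hv : v ∉ τ) (hvτ : τ ∪ {v} ∈ K.faces) : v ∈ U ∨ v ∈ W := by
    obtain ⟨H, hH, hsub⟩ := IsFacet.exists_superset hvτ
    have hvH : K.IsFacet H ∧ τ ⊆ H ∧ v ∈ H :=
      ⟨hH, Finset.union_subset_left hsub, hsub (by simp)⟩
    exact (em (p H)).imp (fun hp => ⟨hv, H, hvH, hp⟩) (fun hp => ⟨hv, H, hvH, hp⟩)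
  have hsep (u) (hu : u ∈ U) (w) (hw : w ∈ W) : τ ∪ {u, w} ∉ K.faces := by
    obtain ⟨huτ, H₁, hu₁, hp₁⟩ := hu
    obtain ⟨hwτ, H₂, hw₂, hp₂⟩ := hw
    intro huw
    obtain ⟨H, hH, hsub⟩ := IsFacet.exists_superset huw
    have hτH := Finset.union_subset_left hsub
    by_cases hp : p H
    · exact hwτ (hinter ⟨hH, hτH, hsub (by simp)⟩ hw₂ hp hp₂)
    · exact huτ (hinter hu₁ ⟨hH, hτH, hsub (by simp)⟩ hp₁ hp)
  rcases union_singleton_notMem_or_of_depthGE_two hτ hdepth hcover hsep with h | h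
  · obtain ⟨v, hvF, hv⟩ := Finset.not_subset.mp (hF.not_subset hG.1 hne hτG)
    exact h v ⟨hv, F, ⟨hF, hτF, hvF⟩, hpF⟩
      (K.down_closed hF.1 (Finset.union_subset hτF (Finset.singleton_subset_iff.mpr hvF)))
  · obtain ⟨v, hvG, hv⟩ := Finset.not_subset.mp (hG.not_subset hF.1 hne.symm hτF)
    exact h v ⟨hv, G, ⟨hG, hτG, hvG⟩, hpG⟩
      (K.down_closed hG.1 (Finset.union_subset hτG (Finset.singleton_subset_iff.mpr hvG)))

lemma card_eq_of_serreS {ℓ : ℕ} (hl : 2 ≤ ℓ) (hserre : SerreS k ℓ K) {F G : Finset V}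
    (hF : K.IsFacet F) (hG : K.IsFacet G) : F.card = G.card := by
  classical
  by_contra hne
  set S := K.faces.filter fun τ => ∃ F G, K.IsFacet F ∧ K.IsFacet G ∧ τ ⊆ F ∩ G ∧ F.card < G.card
  have hS : S.Nonempty := by
    refine ⟨∅, Finset.mem_filter.mpr ⟨K.down_closed hF.1 (Finset.empty_subset _), ?_⟩⟩
    rcases lt_or_gt_of_ne hne with h | h
    · exact ⟨F, G, hF, hG, Finset.empty_subset _, h⟩
    · exact ⟨G, F, hG, hF, Finset.empty_subset _, h⟩
  obtain ⟨τ, hτ⟩ := S.exists_maximal hS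
  obtain ⟨hτK, F, G, hF, hG, hτFG, hlt⟩ := Finset.mem_filter.mp hτ.prop
  obtain ⟨hτF, hτG⟩ := Finset.subset_inter_iff.mp hτFG
  have hτF' : τ ⊂ F := hτF.ssubset_of_not_subset
    (hF.not_subset hG.1 (fun h => hlt.ne (congrArg _ h)) hτG)
  have hheight : ((2 : ℕ) : ℕ∞) ≤ (facePrime k hτK).height :=
    le_height_facePrime hτK hG.1 hτG (by have := Finset.card_lt_card hτF'; omega)
  obtain ⟨F', G', hF', hG', hpF, hpG, hss⟩ := exists_ssubset_inter_of_depthGE_two hτK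
    (serreCondS_iff.mp hserre _ 2 hl hheight) (p := fun H => H.card < G.card) hF hG hτF hτG hlt
    (lt_irrefl _)
  exact hτ.not_gt (Finset.mem_filter.mpr ⟨K.down_closed hF'.1 Finset.inter_subset_left,
    F', G', hF', hG', subset_rfl, hpF.trans_le (not_lt.mp hpG)⟩) hss

end Purity

/-! ### Depth of closed stars -/

section ClosedStar

variable {σ C : Finset V} (hC : C ⊆ σ)

/-- The endomorphism of the Stanley–Reisner ring of the closed star of `σ` with `x_v ↦ 1 - x_v` for
`v ∈ C` and `x_v ↦ x_v` for `v ∉ C`, where `C ⊆ σ`. -/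
noncomputable def reflectHom (k : Type) [Field k] (K : SComplex V) (hC : C ⊆ σ) :
    SRRing k (K.closedStar σ) →ₐ[k] SRRing k (K.closedStar σ) :=
  lift (fun v => if v ∈ C then 1 - var k _ v else var k _ v) fun s hs => by
    have hs' : s \ σ ∉ (K.closedStar σ).faces := by
      rwa [mem_closedStar_iff, Finset.union_sdiff_self_eq_union, ← mem_closedStar_iff]
    rw [← Finset.prod_sdiff (Finset.inter_subset_left (s₁ := s) (s₂ := σ)),
      Finset.sdiff_inter_self_left, Finset.prod_congr rfl fun v hv =>
        if_neg fun hvC => (Finset.mem_sdiff.mp hv).2 (hC hvC)]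
    exact mul_eq_zero_of_left (faceMonomial_eq_zero hs') _

lemma reflectHom_var (v : V) :
    reflectHom k K hC (var k _ v) = if v ∈ C then 1 - var k _ v else var k _ v :=
  lift_var _ _ v

lemma reflectHom_comp_self : (reflectHom k K hC).comp (reflectHom k K hC) = AlgHom.id k _ := by
  refine algHom_ext fun v => ?_
  by_cases hv : v ∈ C <;> simp [reflectHom_var, hv]

/-- The involution `reflectHom` as an automorphism, used to move the variables of `σ` out of a prime
ideal: take `C` to be the set of all `v ∈ σ` with `x_v` in the ideal. -/
noncomputable def reflectEquiv (k : Type) [Field k] (K : SComplex V) (hC : C ⊆ σ) :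
    SRRing k (K.closedStar σ) ≃ₐ[k] SRRing k (K.closedStar σ) :=
  AlgEquiv.ofAlgHom _ _ (reflectHom_comp_self hC) (reflectHom_comp_self hC)

lemma exists_ringEquiv_faceMonomial_notMem_comap (Q : Ideal (SRRing k (K.closedStar σ)))
    [hQ : Q.IsPrime] : ∃ e : SRRing k (K.closedStar σ) ≃+* SRRing k (K.closedStar σ),
      faceMonomial k (K.closedStar σ) σ ∉ Q.comap e := by
  classical
  have hC : (σ.filter fun v => var k _ v ∈ Q) ⊆ σ := Finset.filter_subset _ _
  refine ⟨(reflectEquiv k K hC).toRingEquiv, fun hmem => ?_⟩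
  obtain ⟨v, hv, hmem⟩ := faceMonomial_mem_iff.mp hmem
  have hmem : reflectHom k K hC (var k _ v) ∈ Q := hmem
  rw [reflectHom_var] at hmem
  split_ifs at hmem with h
  · refine hQ.one_notMem ?_
    simpa using add_mem hmem (Finset.mem_filter.mp h).2
  · exact h (Finset.mem_filter.mpr ⟨hv, hmem⟩)

lemma depthGE_localization_closedStar {ℓ n : ℕ} (hserre : SerreS k ℓ K)
    (Q : Ideal (SRRing k (K.closedStar σ))) [Q.IsPrime] (hn : n ≤ ℓ) (hnQ : n ≤ Q.height) :
    DepthGE (Localization.AtPrime Q) (Localization.AtPrime Q) n := by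
  obtain ⟨e, he⟩ := exists_ringEquiv_faceMonomial_notMem_comap Q
  set g : SRRing k K →+* SRRing k (K.closedStar σ) :=
    (toSubcomplex k (K.closedStar_faces_subset σ)).toRingHom
  have hg : Function.Surjective g := toSubcomplex_surjective _
  have hbij := localRingHom_bijective hg (Q.comap e)
    (fun _ => toSubcomplex_closedStar_eq_zero_iff)
    (by rwa [show g _ = _ from toSubcomplex_faceMonomial _ σ])
  have hheight : n ≤ ((Q.comap e).comap g).height := by
    rw [← RingEquiv.height_comap e] at hnQ
    exact hnQ.trans (height_le_height_comap_of_surjective hg _)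
  have hdepth := serreCondS_iff.mp hserre ((Q.comap e).comap g) n hn hheight
  exact hdepth.of_ringEquiv
    ((RingEquiv.ofBijective _ hbij).trans (Localization.localRingEquiv (Q.comap e) Q e rfl))

lemma depthGE_localization_closedStar_of_le_height_comap {ℓ n : ℕ} (hl : 2 ≤ ℓ)
    (hserre : SerreS k ℓ K) (Q : Ideal (SRRing k (K.closedStar σ))) [Q.IsPrime] (hn : n ≤ ℓ)
    (hnQ : n ≤ (Q.comap (toSubcomplex k (K.closedStar_faces_subset σ))).height) :
    DepthGE (Localization.AtPrime Q) (Localization.AtPrime Q) n :=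
  depthGE_localization_closedStar hserre Q hn
    (hnQ.trans (height_comap_toSubcomplex_closedStar_le
      (fun _ _ => card_eq_of_serreS hl hserre) σ Q))

end ClosedStar

end SComplex

/-- If `A ⊆ Δ` is an excellent set of faces (independent, and every facet
contains a member of `A`) and `Δ` satisfies `(S_ℓ)` with `ℓ ≥ 2`, then `Δ_A` satisfies
`(S_{ℓ-1})`. -/
theorem deleteAbove_serre {V : Type} [DecidableEq V] (k : Type) [Field k] (K : SComplex V)
    (A : Finset (Finset V)) (hA : ∀ σ ∈ A, σ ∈ K.faces)
    (hindep : ∀ σ ∈ A, ∀ τ ∈ A, σ ≠ τ → σ ∪ τ ∉ K.faces)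
    (hexc : ∀ F : Finset V, K.IsFacet F → ∃ σ ∈ A, σ ⊆ F)
    (ℓ : ℕ) (hl : 2 ≤ ℓ) (hserre : SComplex.SerreS k ℓ K) :
    SComplex.SerreS k (ℓ - 1) (K.deleteAbove A) := by
  obtain ⟨m, rfl⟩ : ∃ m, ℓ = m + 1 := ⟨ℓ - 1, by omega⟩
  exact SerreCondS.of_ker_eq_span (a := SComplex.faceMonomial k K)
    (f := (SComplex.toSubcomplex k (K.deleteAbove_faces_subset A)).toRingHom)
    (SComplex.toSubcomplex_surjective _) (SComplex.ker_toSubcomplex_deleteAbove A)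
    (fun σ hσ τ hτ hne => SComplex.faceMonomial_mul_eq_zero (hindep σ hσ τ hτ hne))
    (SComplex.sum_faceMonomial_mem_nonZeroDivisors hindep hexc) hserre
    (g := fun σ => (SComplex.toSubcomplex k (K.closedStar_faces_subset σ)).toRingHom)
    (fun _ => SComplex.toSubcomplex_surjective _)
    (fun _ _ => SComplex.toSubcomplex_closedStar_eq_zero_iff)
    fun _ _ Q _ _ hn hnQ =>
      SComplex.depthGE_localization_closedStar_of_le_height_comap hl hserre Q hn hnQ
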